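/- Let k be a field of characteristic p > 0, let e be a positive integer and set q = p·e. Let R = k[y,z]/(y^q − y − z^{q−1}). Then the module of Kähler differentials Ω_{R/k} is generated as an R-module by the single element d(z); that is, the R-submodule spanned by d(z) equals all of Ω_{R/k}. -/

import Mathlib

/-!
In `R = k[y,z]/(y^q - y - z^(q-1))` the relation reads `y = y^q - z^(q-1)`. Since `p ∣ q`, the
derivation kills `y^q` in characteristic `p`, so `dy = -d(z^(q-1)) = -(q-1) z^(q-2) dz` is a
multiple of `dz`. As `R` is generated as a `k`-algebra by `y` and `z`, the module `Ω_{R/k}` is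
spanned by `dy` and `dz`, hence by `dz` alone.
-/

open MvPolynomial

/-- For the affine chart `R = k[y,z]/(y^q - y - z^(q-1))` of the Tango–Raynaud curve
(char k = p > 0, q = p*e), the module of Kähler differentials `Ω_{R/k}` is generated
as an `R`-module by the single element `d z`. -/
theorem stmt1 (k : Type) [Field k] (p e : ℕ) [Fact p.Prime] [CharP k p]
    (he : 0 < e) (q : ℕ) (hq : q = p * e)
    (I : Ideal (MvPolynomial (Fin 2) k))
    (hI : I = Ideal.span {(X 0 : MvPolynomial (Fin 2) k) ^ q - X 0 - X 1 ^ (q - 1)}) :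
    Submodule.span (MvPolynomial (Fin 2) k ⧸ I)
        {(KaehlerDifferential.D k (MvPolynomial (Fin 2) k ⧸ I))
          (Ideal.Quotient.mk I (X 1))} = ⊤ := by
  set S := Submodule.span (MvPolynomial (Fin 2) k ⧸ I)
        {(KaehlerDifferential.D k (MvPolynomial (Fin 2) k ⧸ I))
          (Ideal.Quotient.mk I (X 1))} with hS
  have hz : KaehlerDifferential.D k (MvPolynomial (Fin 2) k ⧸ I)
      (Ideal.Quotient.mk I (X 1)) ∈ S := Submodule.subset_span rfl
  have hy : KaehlerDifferential.D k (MvPolynomial (Fin 2) k ⧸ I)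
      (Ideal.Quotient.mk I (X 0)) ∈ S := by
    have hrel : Ideal.Quotient.mk I (X 0) =
        Ideal.Quotient.mk I (X 0) ^ q - Ideal.Quotient.mk I (X 1) ^ (q - 1) := by
      have h : Ideal.Quotient.mk I (X 0 ^ q - X 0 - X 1 ^ (q - 1)) = 0 :=
        Ideal.Quotient.eq_zero_iff_mem.2 (hI ▸ Ideal.subset_span rfl)
      simp only [map_sub, map_pow] at h
      linear_combination -h
    have hq0 : (q : k) = 0 := by simp [hq]
    rw [hrel, map_sub, Derivation.leibniz_pow, Derivation.leibniz_pow]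
    refine S.sub_mem ?_ (S.smul_of_tower_mem _ (S.smul_mem _ hz))
    rw [← Nat.cast_smul_eq_nsmul k, hq0, zero_smul]
    exact S.zero_mem
  rw [eq_top_iff, ← KaehlerDifferential.span_range_derivation, Submodule.span_le]
  rintro _ ⟨f, rfl⟩
  obtain ⟨f, rfl⟩ := Ideal.Quotient.mk_surjective f
  induction f using MvPolynomial.induction_on with
  | C a =>
    have h : Ideal.Quotient.mk I (C a) = algebraMap k _ a := rfl
    rw [h, Derivation.map_algebraMap]
    exact S.zero_mem
  | add f g hf hg =>
    rw [map_add, map_add]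
    exact S.add_mem hf hg
  | mul_X f i hf =>
    rw [map_mul, Derivation.leibniz]
    refine S.add_mem (S.smul_mem _ ?_) (S.smul_mem _ hf)
    fin_cases i
    · exact hy
    · exact hz
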